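/- For every noncomplete 2-connected simple graph G, cfc(G) = 2. -/

import Mathlib

open SimpleGraph

/-- An edge coloring with `k` colors makes `G` conflict-free connected if any two
distinct vertices are joined by a path on which some color is used on exactly one edge. -/
def IsCFCColoring {V : Type*} (G : SimpleGraph V) (k : ℕ) (c : Sym2 V → Fin k) : Prop :=
  ∀ u v : V, u ≠ v → ∃ p : G.Walk u v, p.IsPath ∧
    ∃ i : Fin k, (p.edges.filter (fun e => c e = i)).length = 1

/-- The conflict-free connection number: the least number of colors in a
conflict-free connected edge coloring. -/
noncomputable def cfcNum {V : Type*} (G : SimpleGraph V) : ℕ :=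
  sInf {k | ∃ c : Sym2 V → Fin k, IsCFCColoring G k c}

theorem exists_avoiding_path {V : Type*} (G : SimpleGraph V) (w a b : V)
    (h : (G.induce {u | u ≠ w}).Connected) (ha : a ≠ w) (hb : b ≠ w) :
    ∃ p : G.Walk a b, p.IsPath ∧ w ∉ p.support := by
  classical
  obtain ⟨q⟩ := h.preconnected ⟨a, ha⟩ ⟨b, hb⟩
  let q' : G.Walk a b := q.map (SimpleGraph.Embedding.induce {u | u ≠ w}).toHom
  have hq : w ∉ q'.support := by
    intro hw
    replace hw := (List.mem_map.1 (Walk.support_map _ q ▸ hw :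
      w ∈ List.map (SimpleGraph.Embedding.induce {u | u ≠ w}).toHom q.support))
    obtain ⟨x, _, hx⟩ := hw
    exact x.2 hx
  exact ⟨q'.bypass, q'.bypass_isPath, fun hw => hq (q'.support_bypass_subset_support hw)⟩

theorem exists_first_hit {V : Type*} (G : SimpleGraph V) (T : V → Prop) {u v : V}
    (p : G.Walk u v) (hv : T v) :
    ∃ z, T z ∧ ∃ R : G.Walk u z, R.support ⊆ p.support ∧ ∀ t ∈ R.support, T t → t = z := by
  induction p with
  | nil => exact ⟨_, hv, Walk.nil, by simp, by simp⟩
  | @cons a b c h p ih =>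
    by_cases ha : T a
    · exact ⟨a, ha, Walk.nil, by simp, by simp⟩
    · obtain ⟨z, hz, R, hR, hT⟩ := ih hv
      refine ⟨z, hz, Walk.cons h R, ?_, ?_⟩
      · intro t ht
        simp only [Walk.support_cons, List.mem_cons] at ht ⊢
        exact ht.imp id (fun x => hR x)
      · intro t ht hTt
        simp only [Walk.support_cons, List.mem_cons] at ht
        rcases ht with rfl | ht
        · exact absurd hTt ha
        · exact hT t ht hTt

theorem append_isPath_of_meet {V : Type*} {G : SimpleGraph V} {a b c : V}
    (p : G.Walk a b) (q : G.Walk b c) (hp : p.IsPath) (hq : q.IsPath)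
    (h : ∀ t ∈ p.support, t ∈ q.support → t = b) : (p.append q).IsPath := by
  rw [Walk.isPath_def, Walk.support_append, List.nodup_append']
  refine ⟨hp.support_nodup, hq.support_nodup.tail, ?_⟩
  intro t ht ht'
  have := h t ht (List.mem_of_mem_tail ht')
  subst this
  have hn := hq.support_nodup
  rw [Walk.support_eq_cons] at hn
  exact (List.nodup_cons.1 hn).1 ht'

theorem step_edge {V : Type*} (G : SimpleGraph V)
    (h2conn : ∀ v : V, (G.induce {u | u ≠ v}).Connected) (e : Sym2 V) {u v w : V}
    (hwu : w ≠ u) (hvw : G.Adj v w)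
    (hP : ∃ p : G.Walk u v, p.IsPath ∧ e ∈ p.edges) :
    ∃ p : G.Walk u w, p.IsPath ∧ e ∈ p.edges := by
  classical
  obtain ⟨P, hP, he⟩ := hP
  by_cases hw : w ∈ P.support
  · by_cases h1 : e ∈ (P.takeUntil w hw).edges
    · exact ⟨_, hP.takeUntil hw, h1⟩
    have h2 : e ∈ (P.dropUntil w hw).edges := by
      rw [← P.take_spec hw, Walk.edges_append, List.mem_append] at he
      exact he.resolve_left h1
    have hQ := hP.dropUntil hw
    generalize P.dropUntil w hw = Q at h2 hQ
    obtain ⟨p, -, hpw⟩ := exists_avoiding_path G w u v (h2conn w) hwu.symm hvw.ne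
    obtain ⟨z, hz, R0, hR0, hT0⟩ := exists_first_hit G (fun t => t ∈ Q.support) p Q.end_mem_support
    have hzw : z ≠ w := fun h => hpw (hR0 (h ▸ R0.end_mem_support))
    have hR : R0.bypass.IsPath := R0.bypass_isPath
    have hT : ∀ t ∈ R0.bypass.support, t ∈ Q.support → t = z :=
      fun t ht => hT0 t (R0.support_bypass_subset_support ht)
    have hRw : w ∉ R0.bypass.support := fun h => hpw (hR0 (R0.support_bypass_subset_support h))
    generalize R0.bypass = R at hR hT hRw
    have h2' := h2
    rw [← Q.take_spec hz, Walk.edges_append, List.mem_append] at h2'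
    rcases h2' with h3 | h3
    · refine ⟨R.append (Q.takeUntil z hz).reverse,
        append_isPath_of_meet _ _ hR (hQ.takeUntil hz).reverse ?_, ?_⟩
      · intro t ht ht'
        rw [Walk.support_reverse, List.mem_reverse] at ht'
        exact hT t ht (Q.support_takeUntil_subset_support hz ht')
      · simp [Walk.edges_append, h3]
    · have hA : (R.append (Q.dropUntil z hz)).IsPath :=
        append_isPath_of_meet _ _ hR (hQ.dropUntil hz)
          fun t ht ht' => hT t ht (Q.support_dropUntil_subset_support hz ht')
      have hwd : w ∉ (Q.dropUntil z hz).support := by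
        intro hh
        have hn := hQ
        rw [← Q.take_spec hz, Walk.isPath_def, Walk.support_append, List.nodup_append'] at hn
        have : w ∈ (Q.dropUntil z hz).support.tail := by
          rw [Walk.support_eq_cons, List.mem_cons] at hh
          exact hh.resolve_left hzw.symm
        exact hn.2.2 (Walk.start_mem_support _) this
      refine ⟨(R.append (Q.dropUntil z hz)).concat hvw, hA.concat ?_ hvw, ?_⟩
      · rw [Walk.mem_support_append_iff]
        exact fun h => h.elim hRw hwd
      · simp [Walk.edges_concat, Walk.edges_append, h3]
  · exact ⟨P.concat hvw, hP.concat hw hvw, by simp [Walk.edges_concat, he]⟩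

theorem exists_path_through {V : Type*} (G : SimpleGraph V)
    (h2conn : ∀ v : V, (G.induce {u | u ≠ v}).Connected) {x y : V} (hxy : G.Adj x y)
    {u v : V} (huv : u ≠ v) :
    ∃ p : G.Walk u v, p.IsPath ∧ s(x, y) ∈ p.edges := by
  classical
  obtain ⟨b, hb, hbase⟩ : ∃ b, b ≠ u ∧ ∃ p : G.Walk u b, p.IsPath ∧ s(x, y) ∈ p.edges := by
    by_cases huy : u = y
    · subst huy
      exact ⟨x, hxy.ne, Walk.cons hxy.symm Walk.nil, by simp [hxy.ne'], by simp [Sym2.eq_swap]⟩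
    · obtain ⟨p, hp, hy⟩ := exists_avoiding_path G y u x (h2conn y) huy hxy.ne
      exact ⟨y, fun h => huy h.symm, p.concat hxy, hp.concat hy hxy, by simp [Walk.edges_concat]⟩
  obtain ⟨q, -, hq⟩ := exists_avoiding_path G u b v (h2conn u) hb huv.symm
  clear huv hb
  induction q with
  | nil => exact hbase
  | @cons a b' c h q ih =>
    simp only [Walk.support_cons, List.mem_cons, not_or] at hq
    refine ih (step_edge G h2conn _ ?_ h hbase) hq.2
    exact fun hh => hq.2 (hh ▸ q.start_mem_support)

/-- Every noncomplete 2-connected graph `G` satisfies `cfc(G) = 2`. -/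
theorem cfc_two_connected {V : Type*} [Fintype V] (G : SimpleGraph V)
    (h3 : 3 ≤ Fintype.card V)
    (h2conn : ∀ v : V, (G.induce {u | u ≠ v}).Connected)
    (hnc : G ≠ ⊤) :
    cfcNum G = 2 := by
  classical
  obtain ⟨a, b, d, hab, had, hbd⟩ := Fintype.two_lt_card_iff.1 h3
  obtain ⟨x, y, hxy⟩ : ∃ x y, G.Adj x y := by
    obtain ⟨p, -, -⟩ := exists_avoiding_path G d a b (h2conn d) had hbd
    cases p with
    | nil => exact absurd rfl hab
    | cons h _ => exact ⟨_, _, h⟩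
  have hmem : 2 ∈ {k | ∃ c : Sym2 V → Fin k, IsCFCColoring G k c} := by
    refine ⟨fun e => if e = s(x, y) then 1 else 0, ?_⟩
    intro u v huv
    obtain ⟨p, hp, he⟩ := exists_path_through G h2conn hxy huv
    refine ⟨p, hp, 1, ?_⟩
    have h1 : p.edges.count s(x, y) = 1 :=
      List.count_eq_one_of_mem hp.isTrail.edges_nodup he
    refine Eq.trans ?_ h1
    rw [List.count, List.countP_eq_length_filter]
    congr 1
    apply List.filter_congr
    intro e _
    by_cases h : e = s(x, y) <;> simp [h]
  refine le_antisymm (Nat.sInf_le hmem) ?_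
  refine le_csInf ⟨2, hmem⟩ ?_
  rintro k ⟨c, hc⟩
  by_contra hk
  have hk' : k = 0 ∨ k = 1 := by omega
  rcases hk' with rfl | rfl
  · exact (c s(x, y)).elim0
  · apply hnc
    ext u v
    rw [top_adj]
    refine ⟨fun h => h.ne, fun huv => ?_⟩
    obtain ⟨p, -, i, hi⟩ := hc u v huv
    have : p.length = 1 := by
      rw [← Walk.length_edges, ← hi, List.filter_eq_self.2]
      intro e _
      simpa using Subsingleton.elim _ _
    exact Walk.adj_of_length_eq_one this
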